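/- Soundness of CKA with hypotheses: for any set H of hypotheses and CKA terms e and f, if e ≡^H f then cl_H(⟦e⟧) = cl_H(⟦f⟧). -/

import Mathlib

namespace CKAH

open Classical

/-! ### Labelled posets and pomsets -/

/-- A labelled poset over alphabet `A`: a finite carrier with a partial order and labelling. -/
structure LPoset (A : Type) : Type 1 where
  carrier : Type
  [fin : Fintype carrier]
  [ord : PartialOrder carrier]
  lab : carrier → A

attribute [instance] LPoset.fin LPoset.ord

/-- Isomorphism of labelled posets: an order isomorphism preserving labels. -/
def LPoset.Iso {A : Type} (u v : LPoset A) : Prop :=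
  ∃ e : u.carrier ≃o v.carrier, ∀ x, v.lab (e x) = u.lab x

theorem LPoset.iso_equivalence (A : Type) : Equivalence (LPoset.Iso (A := A)) where
  refl u := ⟨OrderIso.refl _, fun _ => rfl⟩
  symm := by
    rintro u v ⟨e, he⟩
    exact ⟨e.symm, fun x => by rw [← he (e.symm x), OrderIso.apply_symm_apply]⟩
  trans := by
    rintro u v w ⟨e, he⟩ ⟨f, hf⟩
    exact ⟨e.trans f, fun x => by rw [OrderIso.trans_apply, hf, he]⟩

instance pomSetoid (A : Type) : Setoid (LPoset A) := ⟨LPoset.Iso, LPoset.iso_equivalence A⟩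

/-- A pomset is an isomorphism class of labelled posets. -/
def Pomset (A : Type) : Type 1 := Quotient (pomSetoid A)

/-- Sequential composition of labelled posets: disjoint union, everything on the left
below everything on the right (lexicographic sum order). -/
def LPoset.seqL {A : Type} (u v : LPoset A) : LPoset A where
  carrier := u.carrier ⊕ₗ v.carrier
  fin := inferInstanceAs (Fintype (u.carrier ⊕ v.carrier))
  lab := fun x => Sum.elim u.lab v.lab (ofLex x)

/-- Parallel composition of labelled posets: disjoint union with no cross ordering. -/
def LPoset.parL {A : Type} (u v : LPoset A) : LPoset A where
  carrier := u.carrier ⊕ v.carrier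
  lab := Sum.elim u.lab v.lab

def Pomset.seq {A : Type} : Pomset A → Pomset A → Pomset A :=
  Quotient.map₂ LPoset.seqL (by
    rintro u₁ u₂ ⟨e, he⟩ v₁ v₂ ⟨f, hf⟩
    refine ⟨(RelIso.sumLexCongr e f :
      (u₁.carrier ⊕ₗ v₁.carrier) ≃o (u₂.carrier ⊕ₗ v₂.carrier)), ?_⟩
    rintro (x | x)
    · exact he x
    · exact hf x)

/-- Order isomorphism between disjoint-union orders, from component isomorphisms. -/
def sumOrderIso {α β γ δ : Type} [PartialOrder α] [PartialOrder β] [PartialOrder γ]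
    [PartialOrder δ] (e : α ≃o γ) (f : β ≃o δ) : (α ⊕ β) ≃o (γ ⊕ δ) where
  toEquiv := Equiv.sumCongr e.toEquiv f.toEquiv
  map_rel_iff' := by
    rintro (x | x) (y | y) <;> simp [Sum.le_def, e.le_iff_le, f.le_iff_le]

def Pomset.par {A : Type} : Pomset A → Pomset A → Pomset A :=
  Quotient.map₂ LPoset.parL (by
    rintro u₁ u₂ ⟨e, he⟩ v₁ v₂ ⟨f, hf⟩
    refine ⟨sumOrderIso e f, ?_⟩
    rintro (x | x)
    · exact he x
    · exact hf x)

def LPoset.emptyL (A : Type) : LPoset A := { carrier := Fin 0, lab := fun x => x.elim0 }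

def LPoset.singleL {A : Type} (a : A) : LPoset A := { carrier := PUnit, lab := fun _ => a }

/-- The empty pomset `1`. -/
def Pomset.empty (A : Type) : Pomset A := ⟦LPoset.emptyL A⟧

/-- The single-letter pomset. -/
def Pomset.single {A : Type} (a : A) : Pomset A := ⟦LPoset.singleL a⟧

/-- Subsumption on labelled posets: `u ⊑ v` iff there is a label-preserving
order-preserving bijection from the carrier of `v` to that of `u`. -/
def LPoset.subL {A : Type} (u v : LPoset A) : Prop :=
  ∃ h : v.carrier ≃ u.carrier,
    (∀ x, u.lab (h x) = v.lab x) ∧ ∀ x y : v.carrier, x ≤ y → h x ≤ h y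

/-- Subsumption of pomsets: `Pomset.sub U V` means `U ⊑ V`. -/
def Pomset.sub {A : Type} : Pomset A → Pomset A → Prop :=
  Quotient.lift₂ LPoset.subL (by
    rintro u₁ v₁ u₂ v₂ ⟨e, he⟩ ⟨f, hf⟩
    refine propext ⟨?_, ?_⟩
    · rintro ⟨h, hl, hm⟩
      refine ⟨(f.toEquiv.symm.trans h).trans e.toEquiv, fun x => ?_, fun x y hxy => ?_⟩
      · show u₂.lab (e (h (f.symm x))) = v₂.lab x
        rw [he, hl, ← hf (f.symm x), OrderIso.apply_symm_apply]
      · simp only [Equiv.trans_apply]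
        exact e.le_iff_le.mpr (hm _ _ (f.symm.le_iff_le.mpr hxy))
    · rintro ⟨h, hl, hm⟩
      refine ⟨(f.toEquiv.trans h).trans e.toEquiv.symm, fun x => ?_, fun x y hxy => ?_⟩
      · show u₁.lab (e.symm (h (f x))) = v₁.lab x
        rw [← he (e.symm (h (f x))), OrderIso.apply_symm_apply, hl, hf]
      · simp only [Equiv.trans_apply]
        exact e.symm.le_iff_le.mpr (hm _ _ (f.le_iff_le.mpr hxy)))

def LPoset.isWordL {A : Type} (u : LPoset A) : Prop := ∀ x y : u.carrier, x ≤ y ∨ y ≤ x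

/-- A pomset is a word when it is totally ordered. -/
def Pomset.IsWord {A : Type} : Pomset A → Prop :=
  Quotient.lift LPoset.isWordL (by
    rintro u v ⟨e, -⟩
    refine propext ⟨fun h x y => ?_, fun h x y => ?_⟩
    · rcases h (e.symm x) (e.symm y) with h' | h'
      · exact Or.inl (e.symm.le_iff_le.mp h')
      · exact Or.inr (e.symm.le_iff_le.mp h')
    · rcases h (e x) (e y) with h' | h'
      · exact Or.inl (e.le_iff_le.mp h')
      · exact Or.inr (e.le_iff_le.mp h'))

def LPoset.mapL {A B : Type} (f : A → B) (u : LPoset A) : LPoset B :=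
  { carrier := u.carrier, lab := f ∘ u.lab }

/-- Relabelling of pomsets along a function on letters. -/
def Pomset.map {A B : Type} (f : A → B) : Pomset A → Pomset B :=
  Quotient.map (LPoset.mapL f)
    (by rintro u v ⟨e, he⟩; exact ⟨e, fun x => congrArg f (he x)⟩)

def LPoset.overL {A : Type} (Γ : Set A) (u : LPoset A) : Prop := ∀ x, u.lab x ∈ Γ

/-- All labels of the pomset belong to `Γ`. -/
def Pomset.Over {A : Type} (Γ : Set A) : Pomset A → Prop :=
  Quotient.lift (LPoset.overL Γ) (by
    rintro u v ⟨e, he⟩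
    refine propext ⟨fun h x => ?_, fun h x => ?_⟩
    · have h2 := he (e.symm x)
      rw [OrderIso.apply_symm_apply] at h2
      rw [h2]; exact h _
    · rw [← he x]; exact h _)

/-- Series-parallel pomsets. -/
inductive Pomset.IsSP {A : Type} : Pomset A → Prop
  | empty : Pomset.IsSP (Pomset.empty A)
  | single (a : A) : Pomset.IsSP (Pomset.single a)
  | seq {U V : Pomset A} : Pomset.IsSP U → Pomset.IsSP V → Pomset.IsSP (Pomset.seq U V)
  | par {U V : Pomset A} : Pomset.IsSP U → Pomset.IsSP V → Pomset.IsSP (Pomset.par U V)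

def SPset (A : Type) : Set (Pomset A) := {U | U.IsSP}

/-! ### Pomset contexts -/

/-- Contexts are pomsets over `Option A`, where `none` plays the role of `*`.
`uniqueStarL` says there is exactly one `*`-labelled node. -/
def LPoset.uniqueStarL {A : Type} (c : LPoset (Option A)) : Prop := ∃! x, c.lab x = none

theorem LPoset.uniqueStarL_congr {A : Type} {u v : LPoset (Option A)}
    (e : u.carrier ≃o v.carrier) (he : ∀ x, v.lab (e x) = u.lab x) :
    u.uniqueStarL ↔ v.uniqueStarL := by
  constructor
  · rintro ⟨x, hx, hux⟩
    refine ⟨e x, show v.lab (e x) = none by rw [he]; exact hx, fun y hy => ?_⟩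
    have h2 := he (e.symm y)
    rw [OrderIso.apply_symm_apply] at h2
    have h3 : e.symm y = x := hux _ (h2.symm.trans hy)
    rw [← h3, OrderIso.apply_symm_apply]
  · rintro ⟨x, hx, hvx⟩
    refine ⟨e.symm x, ?_, fun y hy => ?_⟩
    · show u.lab (e.symm x) = none
      have h2 := he (e.symm x)
      rw [OrderIso.apply_symm_apply] at h2
      rw [← h2]; exact hx
    · have h3 : e y = x := hvx _ (show v.lab (e y) = none by rw [he]; exact hy)
      rw [← h3, OrderIso.symm_apply_apply]

/-- A pomset context: exactly one node labelled `*`. -/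
def Pomset.IsCtx {A : Type} : Pomset (Option A) → Prop :=
  Quotient.lift LPoset.uniqueStarL
    (fun _ _ h => propext (LPoset.uniqueStarL_congr h.choose h.choose_spec))

/-- Series-parallel pomset contexts. -/
def Pomset.IsSPCtx {A : Type} (C : Pomset (Option A)) : Prop := C.IsCtx ∧ C.IsSP

/-- Sequential (totally ordered) pomset contexts. -/
def Pomset.IsSeqCtx {A : Type} (C : Pomset (Option A)) : Prop := C.IsCtx ∧ C.IsWord

/-- The trivial context `*`. -/
def starCtx (A : Type) : Pomset (Option A) := Pomset.single (none : Option A)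

theorem option_get_eq_get {α : Type} {o₁ o₂ : Option α} (h : o₁ = o₂) (h₁ : o₁.isSome)
    (h₂ : o₂.isSome) : o₁.get h₁ = o₂.get h₂ := by subst h; rfl

/-- The order of `C[U]`: the orders of `C` (restricted away from `*`) and of `U`, with a
point of `C` below (resp. above) all of `U` when it is below (resp. above) the unique
`*`-node of `C`.  (For well-definedness of the order, the cross-relations are guarded by
the requirement that the star node is unique, which holds for every genuine context.) -/
def LPoset.insLe {A : Type} (c : LPoset (Option A)) (u : LPoset A) :
    ({x : c.carrier // c.lab x ≠ none} ⊕ u.carrier) →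
    ({x : c.carrier // c.lab x ≠ none} ⊕ u.carrier) → Prop
  | Sum.inl x, Sum.inl y => x.val ≤ y.val
  | Sum.inr x, Sum.inr y => x ≤ y
  | Sum.inl x, Sum.inr _ => c.uniqueStarL ∧ ∃ s, c.lab s = none ∧ x.val ≤ s
  | Sum.inr _, Sum.inl y => c.uniqueStarL ∧ ∃ s, c.lab s = none ∧ s ≤ y.val

/-- Insertion of a labelled poset `u` into the gap of a context `c`: the `*`-labelled
node is removed and `u` is put in its place, inheriting the order relations of `*`. -/
noncomputable def LPoset.insL {A : Type} (c : LPoset (Option A)) (u : LPoset A) :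
    LPoset A where
  carrier := {x : c.carrier // c.lab x ≠ none} ⊕ u.carrier
  fin := by classical exact inferInstance
  ord :=
    { le := LPoset.insLe c u
      lt := fun p q => LPoset.insLe c u p q ∧ ¬ LPoset.insLe c u q p
      lt_iff_le_not_ge := fun _ _ => Iff.rfl
      le_refl := by rintro (x | x) <;> exact le_refl _
      le_trans := by
        rintro (x | x) (y | y) (z | z) h1 h2
        · exact le_trans h1 h2
        · obtain ⟨hu, s, hs, hys⟩ := h2
          exact ⟨hu, s, hs, le_trans h1 hys⟩
        · obtain ⟨hu, s, hs, hxs⟩ := h1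
          obtain ⟨-, t, ht, htz⟩ := h2
          obtain ⟨w, hw, huniq⟩ := hu
          have hst : s = t := (huniq s hs).trans (huniq t ht).symm
          exact le_trans (hst ▸ hxs) htz
        · exact h1
        · obtain ⟨hu, s, hs, hsy⟩ := h1
          exact ⟨hu, s, hs, le_trans hsy h2⟩
        · obtain ⟨hu, s, hs, hsy⟩ := h1
          obtain ⟨-, t, ht, hyt⟩ := h2
          obtain ⟨w, hw, huniq⟩ := hu
          have hst : s = t := (huniq s hs).trans (huniq t ht).symm
          have hy : y.val = s := le_antisymm (hst.symm ▸ hyt) hsy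
          exact absurd (hy.symm ▸ hs) y.prop
        · exact h2
        · exact le_trans h1 h2
      le_antisymm := by
        rintro (x | x) (y | y) h1 h2
        · exact congrArg Sum.inl (Subtype.ext (le_antisymm h1 h2))
        · obtain ⟨hu, s, hs, hxs⟩ := h1
          obtain ⟨-, t, ht, htx⟩ := h2
          obtain ⟨w, hw, huniq⟩ := hu
          have hst : s = t := (huniq s hs).trans (huniq t ht).symm
          have hx : x.val = s := le_antisymm hxs (hst.symm ▸ htx)
          exact absurd (hx.symm ▸ hs) x.prop
        · obtain ⟨hu, s, hs, hsy⟩ := h1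
          obtain ⟨-, t, ht, hyt⟩ := h2
          obtain ⟨w, hw, huniq⟩ := hu
          have hst : s = t := (huniq s hs).trans (huniq t ht).symm
          have hy : y.val = s := le_antisymm (hst.symm ▸ hyt) hsy
          exact absurd (hy.symm ▸ hs) y.prop
        · exact congrArg Sum.inr (le_antisymm h1 h2) }
  lab := Sum.elim (fun x => (c.lab x.val).get (Option.isSome_iff_ne_none.mpr x.prop)) u.lab

/-- `Pomset.ins C U` is `C[U]`: plugging the pomset `U` into the gap of the context `C`. -/
noncomputable def Pomset.ins {A : Type} : Pomset (Option A) → Pomset A → Pomset A :=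
  Quotient.map₂ LPoset.insL (by
    rintro c₁ c₂ ⟨e, he⟩ u₁ u₂ ⟨f, hf⟩
    have hstar : c₁.uniqueStarL ↔ c₂.uniqueStarL := LPoset.uniqueStarL_congr e he
    refine ⟨{ toEquiv := Equiv.sumCongr
                (e.toEquiv.subtypeEquiv fun x => by
                  rw [show c₂.lab (e.toEquiv x) = c₁.lab x from he x]) f.toEquiv
              map_rel_iff' := ?_ }, ?_⟩
    · rintro (x | x) (y | y)
      · exact e.le_iff_le
      · show (c₂.uniqueStarL ∧ ∃ s, c₂.lab s = none ∧ (e x.val : c₂.carrier) ≤ s) ↔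
             (c₁.uniqueStarL ∧ ∃ s, c₁.lab s = none ∧ x.val ≤ s)
        constructor
        · rintro ⟨hu, s, hs, hxs⟩
          refine ⟨hstar.mpr hu, e.symm s, ?_, ?_⟩
          · have h2 := he (e.symm s)
            rw [OrderIso.apply_symm_apply] at h2
            rw [← h2]; exact hs
          · exact e.le_iff_le.mp (by rw [OrderIso.apply_symm_apply]; exact hxs)
        · rintro ⟨hu, s, hs, hxs⟩
          exact ⟨hstar.mp hu, e s, by rw [he]; exact hs, e.le_iff_le.mpr hxs⟩
      · show (c₂.uniqueStarL ∧ ∃ s, c₂.lab s = none ∧ s ≤ (e y.val : c₂.carrier)) ↔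
             (c₁.uniqueStarL ∧ ∃ s, c₁.lab s = none ∧ s ≤ y.val)
        constructor
        · rintro ⟨hu, s, hs, hsy⟩
          refine ⟨hstar.mpr hu, e.symm s, ?_, ?_⟩
          · have h2 := he (e.symm s)
            rw [OrderIso.apply_symm_apply] at h2
            rw [← h2]; exact hs
          · exact e.le_iff_le.mp (by rw [OrderIso.apply_symm_apply]; exact hsy)
        · rintro ⟨hu, s, hs, hsy⟩
          exact ⟨hstar.mp hu, e s, by rw [he]; exact hs, e.le_iff_le.mpr hsy⟩
      · exact f.le_iff_le
    · rintro (x | x)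
      · exact option_get_eq_get (he x.val) _ _
      · exact hf x)

/-! ### Pomset languages -/

abbrev Lang (A : Type) := Set (Pomset A)

def Lang.seq {A : Type} (L K : Lang A) : Lang A :=
  {W | ∃ U ∈ L, ∃ V ∈ K, W = Pomset.seq U V}

def Lang.par {A : Type} (L K : Lang A) : Lang A :=
  {W | ∃ U ∈ L, ∃ V ∈ K, W = Pomset.par U V}

def Lang.pow {A : Type} (L : Lang A) : ℕ → Lang A
  | 0 => {Pomset.empty A}
  | n + 1 => Lang.seq (Lang.pow L n) L

def Lang.star {A : Type} (L : Lang A) : Lang A := ⋃ n, L.pow n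

/-- Application of a context to a language: `C[L] = {C[U] : U ∈ L}`. -/
def Ctx.img {A : Type} (C : Pomset (Option A)) (L : Lang A) : Lang A :=
  {W | ∃ U ∈ L, W = C.ins U}

/-! ### CKA terms and semantics -/

inductive Term (A : Type) : Type
  | zero : Term A
  | one : Term A
  | var : A → Term A
  | add : Term A → Term A → Term A
  | seq : Term A → Term A → Term A
  | par : Term A → Term A → Term A
  | star : Term A → Term A

/-- Pomset language semantics of CKA terms. -/
def Term.lang {A : Type} : Term A → Lang A
  | .zero => ∅
  | .one => {Pomset.empty A}
  | .var a => {Pomset.single a}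
  | .add e f => e.lang ∪ f.lang
  | .seq e f => Lang.seq e.lang f.lang
  | .par e f => Lang.par e.lang f.lang
  | .star e => Lang.star e.lang

/-- Sets of hypotheses: a hypothesis `e ≤ f` is the pair `(e, f)`. -/
abbrev HypSet (A : Type) := Set (Term A × Term A)

/-- The congruence `≡^H` on CKA terms generated by the CKA axioms and the hypotheses `H`
(the constructor `hyp` encodes `e ≦^H f`, i.e. `e + f ≡^H f`, for `e ≤ f ∈ H`). -/
inductive CongH {A : Type} (H : HypSet A) : Term A → Term A → Prop
  | refl (e) : CongH H e e
  | symm {e f} : CongH H e f → CongH H f e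
  | trans {e f g} : CongH H e f → CongH H f g → CongH H e g
  | addCong {e e' f f'} : CongH H e e' → CongH H f f' → CongH H (.add e f) (.add e' f')
  | seqCong {e e' f f'} : CongH H e e' → CongH H f f' → CongH H (.seq e f) (.seq e' f')
  | parCong {e e' f f'} : CongH H e e' → CongH H f f' → CongH H (.par e f) (.par e' f')
  | starCong {e e'} : CongH H e e' → CongH H (.star e) (.star e')
  | addZero (e) : CongH H (.add e .zero) e
  | addIdem (e) : CongH H (.add e e) e
  | addComm (e f) : CongH H (.add e f) (.add f e)
  | addAssoc (e f g) : CongH H (.add e (.add f g)) (.add (.add e f) g)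
  | seqAssoc (e f g) : CongH H (.seq e (.seq f g)) (.seq (.seq e f) g)
  | seqDistL (e f g) : CongH H (.seq e (.add f g)) (.add (.seq e f) (.seq e g))
  | seqDistR (e f g) : CongH H (.seq (.add e f) g) (.add (.seq e g) (.seq f g))
  | seqOneR (e) : CongH H (.seq e .one) e
  | seqOneL (e) : CongH H (.seq .one e) e
  | seqZeroR (e) : CongH H (.seq e .zero) .zero
  | seqZeroL (e) : CongH H (.seq .zero e) .zero
  | parComm (e f) : CongH H (.par e f) (.par f e)
  | parOne (e) : CongH H (.par e .one) e
  | parZero (e) : CongH H (.par e .zero) .zero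
  | parAssoc (e f g) : CongH H (.par e (.par f g)) (.par (.par e f) g)
  | parDist (e f g) : CongH H (.par e (.add f g)) (.add (.par e f) (.par e g))
  | starUnfoldL (e) : CongH H (.add .one (.seq e (.star e))) (.star e)
  | starUnfoldR (e) : CongH H (.add .one (.seq (.star e) e)) (.star e)
  | lfpL {e f g} : CongH H (.add (.add e (.seq f g)) g) g →
      CongH H (.add (.seq (.star f) e) g) g
  | lfpR {e f g} : CongH H (.add (.add e (.seq f g)) f) f →
      CongH H (.add (.seq e (.star g)) f) f
  | hyp {e f} : (e, f) ∈ H → CongH H (.add e f) f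

/-- `e ≦^H f`, the natural order `e + f ≡^H f`. -/
def LeH {A : Type} (H : HypSet A) (e f : Term A) : Prop := CongH H (.add e f) f

/-- The `H`-closure of a pomset language, as an inductive predicate: the smallest language
containing `L` such that for all `e ≤ f ∈ H` and series-parallel contexts `C`,
if `C[⟦f⟧] ⊆ cl` then `C[⟦e⟧] ⊆ cl`. -/
inductive closure {A : Type} (H : HypSet A) (L : Lang A) : Pomset A → Prop
  | base {U} : U ∈ L → closure H L U
  | step {e f : Term A} (hef : (e, f) ∈ H) {C : Pomset (Option A)} (hC : C.IsSPCtx)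
      (hf : ∀ V ∈ f.lang, closure H L (C.ins V)) {U} (hU : U ∈ e.lang) :
      closure H L (C.ins U)

/-- `cl H L` is the `H`-closure of `L`. -/
def cl {A : Type} (H : HypSet A) (L : Lang A) : Lang A := {U | closure H L U}

/-- The sequential closure: like `cl` but only sequential contexts are used. -/
inductive seqClosure {A : Type} (H : HypSet A) (L : Lang A) : Pomset A → Prop
  | base {U} : U ∈ L → seqClosure H L U
  | step {e f : Term A} (hef : (e, f) ∈ H) {C : Pomset (Option A)} (hC : C.IsSeqCtx)
      (hf : ∀ V ∈ f.lang, seqClosure H L (C.ins V)) {U} (hU : U ∈ e.lang) :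
      seqClosure H L (C.ins U)

def seqCl {A : Type} (H : HypSet A) (L : Lang A) : Lang A := {U | seqClosure H L U}

/-! ### Implication, completeness, reductions -/

/-- `H` implies `H'`: every hypothesis of `H'` is derivable from `H`. -/
def Implies {A : Type} (H H' : HypSet A) : Prop := ∀ p ∈ H', LeH H p.1 p.2

/-- `H` is complete: semantic equivalence implies axiomatic equivalence. -/
def Complete {A : Type} (H : HypSet A) : Prop :=
  ∀ e f : Term A, cl H e.lang = cl H f.lang → CongH H e f

/-- A reduction from `H` to `H'` (presupposing that `H` implies `H'`). -/
structure IsReduction {A : Type} (H H' : HypSet A) (r : Term A → Term A) : Prop where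
  implies : Implies H H'
  equiv : ∀ e, CongH H e (r e)
  reflect : ∀ e f : Term A, cl H e.lang = cl H f.lang → cl H' (r e).lang = cl H' (r f).lang

def Reduces {A : Type} (H H' : HypSet A) : Prop := ∃ r, IsReduction H H' r

/-- A strong reduction from `H` to `H'`. -/
structure IsStrongReduction {A : Type} (H H' : HypSet A) (r : Term A → Term A)
    extends IsReduction H H' r : Prop where
  strong : ∀ e : Term A, cl H e.lang = cl H' (r e).lang

def StronglyReduces {A : Type} (H H' : HypSet A) : Prop := ∃ r, IsStrongReduction H H' r

/-- `H` factorises into `H₀` and `H₁`. -/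
def Factorises {A : Type} (H H₀ H₁ : HypSet A) : Prop :=
  Implies H H₀ ∧ Implies H H₁ ∧ ∀ L : Lang A, L ⊆ SPset A → cl H L = cl H₁ (cl H₀ L)

/-! ### The exchange hypotheses and sp-subsumption -/

/-- The exchange hypotheses `(e∥f)·(g∥h) ≤ (e·g)∥(f·h)`. -/
def exch (A : Type) : HypSet A :=
  {p | ∃ e f g h : Term A,
    p = (Term.seq (.par e f) (.par g h), Term.par (.seq e g) (.seq f h))}

/-- `⊑^sp`: the smallest precongruence on series-parallel pomsets satisfying the
exchange inequality. -/
inductive spSub {A : Type} : Pomset A → Pomset A → Prop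
  | refl {U : Pomset A} : U.IsSP → spSub U U
  | trans {U V W} : spSub U V → spSub V W → spSub U W
  | seqCong {U V U' V'} : spSub U V → spSub U' V' → spSub (Pomset.seq U U') (Pomset.seq V V')
  | parCong {U V U' V'} : spSub U V → spSub U' V' → spSub (Pomset.par U U') (Pomset.par V V')
  | exch {U V W X : Pomset A} : U.IsSP → V.IsSP → W.IsSP → X.IsSP →
      spSub (Pomset.seq (Pomset.par U V) (Pomset.par W X))
            (Pomset.par (Pomset.seq U W) (Pomset.seq V X))

/-! ### KA terms, grounded hypotheses, sequential reductions -/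

/-- A term is a KA term when it contains no `∥`. -/
def Term.noPar {A : Type} : Term A → Prop
  | .zero => True
  | .one => True
  | .var _ => True
  | .add e f => e.noPar ∧ f.noPar
  | .seq e f => e.noPar ∧ f.noPar
  | .par _ _ => False
  | .star e => e.noPar

/-- A non-empty word. -/
def IsNonemptyWord {A : Type} (W : Pomset A) : Prop := W.IsWord ∧ W ≠ Pomset.empty A

/-- A set of hypotheses is grounded when in each hypothesis `e ≤ f`, `e` is a KA term and
`⟦f⟧ = {W}` for a non-empty word `W`. -/
def Grounded {A : Type} (H : HypSet A) : Prop :=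
  ∀ p ∈ H, p.1.noPar ∧ ∃ W : Pomset A, IsNonemptyWord W ∧ p.2.lang = {W}

/-- `≡_KA^H`: the congruence on terms generated by the axioms of `≡` not involving `∥`
together with the hypotheses of `H`. -/
inductive KACong {A : Type} (H : HypSet A) : Term A → Term A → Prop
  | refl (e) : KACong H e e
  | symm {e f} : KACong H e f → KACong H f e
  | trans {e f g} : KACong H e f → KACong H f g → KACong H e g
  | addCong {e e' f f'} : KACong H e e' → KACong H f f' → KACong H (.add e f) (.add e' f')
  | seqCong {e e' f f'} : KACong H e e' → KACong H f f' → KACong H (.seq e f) (.seq e' f')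
  | starCong {e e'} : KACong H e e' → KACong H (.star e) (.star e')
  | addZero (e) : KACong H (.add e .zero) e
  | addIdem (e) : KACong H (.add e e) e
  | addComm (e f) : KACong H (.add e f) (.add f e)
  | addAssoc (e f g) : KACong H (.add e (.add f g)) (.add (.add e f) g)
  | seqAssoc (e f g) : KACong H (.seq e (.seq f g)) (.seq (.seq e f) g)
  | seqDistL (e f g) : KACong H (.seq e (.add f g)) (.add (.seq e f) (.seq e g))
  | seqDistR (e f g) : KACong H (.seq (.add e f) g) (.add (.seq e g) (.seq f g))
  | seqOneR (e) : KACong H (.seq e .one) e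
  | seqOneL (e) : KACong H (.seq .one e) e
  | seqZeroR (e) : KACong H (.seq e .zero) .zero
  | seqZeroL (e) : KACong H (.seq .zero e) .zero
  | starUnfoldL (e) : KACong H (.add .one (.seq e (.star e))) (.star e)
  | starUnfoldR (e) : KACong H (.add .one (.seq (.star e) e)) (.star e)
  | lfpL {e f g} : KACong H (.add (.add e (.seq f g)) g) g →
      KACong H (.add (.seq (.star f) e) g) g
  | lfpR {e f g} : KACong H (.add (.add e (.seq f g)) f) f →
      KACong H (.add (.seq e (.star g)) f) f
  | hyp {e f} : (e, f) ∈ H → KACong H (.add e f) f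

/-- A sequential reduction from `H` to `H'`. -/
structure IsSeqReduction {A : Type} (H H' : HypSet A) (r : Term A → Term A) : Prop where
  implies : Implies H H'
  equiv : ∀ e : Term A, e.noPar → KACong H e (r e)
  closure_eq : ∀ e : Term A, e.noPar → seqCl H e.lang = seqCl H' (r e).lang

/-- Extension of a map on (KA) terms to all CKA terms, homomorphically on `∥`. -/
def parExt {A : Type} (r : Term A → Term A) : Term A → Term A
  | .par e f => .par (parExt r e) (parExt r f)
  | e => r e

/-! ### Inductive characterisation of sp contexts -/

/-- The generators of series-parallel contexts (Lemma: `PC^sp` is the smallest such set). -/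
inductive GenCtx {A : Type} : Pomset (Option A) → Prop
  | star : GenCtx (Pomset.single (none : Option A))
  | seqL {U : Pomset A} {C} : U.IsSP → GenCtx C → GenCtx (Pomset.seq (Pomset.map some U) C)
  | seqR {C} {V : Pomset A} : GenCtx C → V.IsSP → GenCtx (Pomset.seq C (Pomset.map some V))
  | par {U : Pomset A} {C} : U.IsSP → GenCtx C → GenCtx (Pomset.par (Pomset.map some U) C)

/-! ### Reification -/

/-- Homomorphic extension of a letter map to terms. -/
def rTerm {A : Type} (r : A → Term A) : Term A → Term A
  | .zero => .zero
  | .one => .one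
  | .var a => r a
  | .add e f => .add (rTerm r e) (rTerm r f)
  | .seq e f => .seq (rTerm r e) (rTerm r f)
  | .par e f => .par (rTerm r e) (rTerm r f)
  | .star e => .star (rTerm r e)

/-- All letters of a term lie in `Γ`. -/
def TermOver {A : Type} (Γ : Set A) : Term A → Prop
  | .zero => True
  | .one => True
  | .var a => a ∈ Γ
  | .add e f => TermOver Γ e ∧ TermOver Γ f
  | .seq e f => TermOver Γ e ∧ TermOver Γ f
  | .par e f => TermOver Γ e ∧ TermOver Γ f
  | .star e => TermOver Γ e

/-- Extension of a letter map `r` to (series-parallel) pomsets, as a relation: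
`rMap r U V` means `V ∈ r(U)`. -/
inductive rMap {A : Type} (r : A → Term A) : Pomset A → Pomset A → Prop
  | one : rMap r (Pomset.empty A) (Pomset.empty A)
  | var (a : A) {V} : V ∈ (r a).lang → rMap r (Pomset.single a) V
  | seq {U U' V V'} : rMap r U V → rMap r U' V' →
      rMap r (Pomset.seq U U') (Pomset.seq V V')
  | par {U U' V V'} : rMap r U V → rMap r U' V' →
      rMap r (Pomset.par U U') (Pomset.par V V')

/-- Image of a language under (the pomset extension of) `r`. -/
def rImg {A : Type} (r : A → Term A) (L : Lang A) : Lang A := {V | ∃ U ∈ L, rMap r U V}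

/-- Series-parallel pomsets over the subalphabet `Γ`. -/
def SPover {A : Type} (Γ : Set A) : Lang A := {U | U.IsSP ∧ U.Over Γ}

/-- `r : Σ → Term Γ` is a reification from `H` to `H'`. -/
structure IsReification {A : Type} (Γ : Set A) (H H' : HypSet A) (r : A → Term A) : Prop where
  toGamma : ∀ a : A, TermOver Γ (r a)
  equiv : ∀ a : A, CongH H (r a) (.var a)
  expansive : ∀ a ∈ Γ, LeH (∅ : HypSet A) (.var a) (r a)
  preserves : ∀ L : Lang A, L ⊆ SPover Γ → cl H' L ⊆ SPover Γ
  hyps : ∀ p ∈ H, LeH H' (rTerm r p.1) (rTerm r p.2)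

end CKAH

namespace CKAH

theorem iso_of {A : Type} {u v : LPoset A} (f : u.carrier → v.carrier)
    (hs : Function.Surjective f) (hle : ∀ x y, f x ≤ f y ↔ x ≤ y)
    (hl : ∀ x, v.lab (f x) = u.lab x) : u.Iso v :=
  ⟨RelIso.ofSurjective (OrderEmbedding.ofMapLEIff f hle) hs, hl⟩

theorem seqL_ll {A : Type} {u v : LPoset A} (x y : u.carrier) :
    (show (u.seqL v).carrier from toLex (Sum.inl x)) ≤
      (show (u.seqL v).carrier from toLex (Sum.inl y)) ↔ x ≤ y :=
  Sum.Lex.inl_le_inl_iff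
theorem seqL_rr {A : Type} {u v : LPoset A} (x y : v.carrier) :
    (show (u.seqL v).carrier from toLex (Sum.inr x)) ≤
      (show (u.seqL v).carrier from toLex (Sum.inr y)) ↔ x ≤ y :=
  Sum.Lex.inr_le_inr_iff
theorem seqL_lr {A : Type} {u v : LPoset A} (x : u.carrier) (y : v.carrier) :
    (show (u.seqL v).carrier from toLex (Sum.inl x)) ≤
      (show (u.seqL v).carrier from toLex (Sum.inr y)) :=
  Sum.Lex.inl_le_inr x y
theorem seqL_rl {A : Type} {u v : LPoset A} (x : u.carrier) (y : v.carrier) :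
    ¬ (show (u.seqL v).carrier from toLex (Sum.inr y)) ≤
      (show (u.seqL v).carrier from toLex (Sum.inl x)) :=
  Sum.Lex.not_inr_le_inl

theorem parL_rr {A : Type} {u v : LPoset A} (x y : v.carrier) :
    (show (u.parL v).carrier from Sum.inr x) ≤ (show (u.parL v).carrier from Sum.inr y) ↔
      x ≤ y := Sum.inr_le_inr_iff

theorem seq_assoc {A : Type} (U V W : Pomset A) :
    Pomset.seq U (Pomset.seq V W) = Pomset.seq (Pomset.seq U V) W := by
  induction U using Quotient.inductionOn with | _ u => ?_
  induction V using Quotient.inductionOn with | _ v => ?_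
  induction W using Quotient.inductionOn with | _ w => ?_
  refine Eq.symm (Quotient.sound ⟨(OrderIso.sumLexAssoc u.carrier v.carrier w.carrier), ?_⟩)
  rintro ((x | x) | x) <;> rfl

theorem seq_one {A : Type} (U : Pomset A) : Pomset.seq U (Pomset.empty A) = U := by
  induction U using Quotient.inductionOn with | _ u => ?_
  refine Eq.symm (Quotient.sound (iso_of (fun x => toLex (Sum.inl x)) ?_ ?_ ?_))
  · rintro (x | x)
    · exact ⟨x, rfl⟩
    · exact x.elim0
  · intro x y; exact seqL_ll x y
  · intro x; rfl

theorem one_seq {A : Type} (U : Pomset A) : Pomset.seq (Pomset.empty A) U = U := by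
  induction U using Quotient.inductionOn with | _ u => ?_
  refine Eq.symm (Quotient.sound (iso_of (fun x => toLex (Sum.inr x)) ?_ ?_ ?_))
  · rintro (x | x)
    · exact x.elim0
    · exact ⟨x, rfl⟩
  · intro x y; exact seqL_rr x y
  · intro x; rfl

theorem par_assoc {A : Type} (U V W : Pomset A) :
    Pomset.par U (Pomset.par V W) = Pomset.par (Pomset.par U V) W := by
  induction U using Quotient.inductionOn with | _ u => ?_
  induction V using Quotient.inductionOn with | _ v => ?_
  induction W using Quotient.inductionOn with | _ w => ?_
  refine Eq.symm (Quotient.sound ⟨(OrderIso.sumAssoc u.carrier v.carrier w.carrier), ?_⟩)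
  rintro ((x | x) | x) <;> rfl

theorem par_comm {A : Type} (U V : Pomset A) : Pomset.par U V = Pomset.par V U := by
  induction U using Quotient.inductionOn with | _ u => ?_
  induction V using Quotient.inductionOn with | _ v => ?_
  refine Quotient.sound ⟨(OrderIso.sumComm u.carrier v.carrier), ?_⟩
  rintro (x | x) <;> rfl

theorem par_one {A : Type} (U : Pomset A) : Pomset.par U (Pomset.empty A) = U := by
  induction U using Quotient.inductionOn with | _ u => ?_
  refine Eq.symm (Quotient.sound (iso_of (fun x => Sum.inl x) ?_ ?_ ?_))
  · rintro (x | x)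
    · exact ⟨x, rfl⟩
    · exact x.elim0
  · intro x y; exact Sum.inl_le_inl_iff
  · intro x; rfl

theorem star_ins {A : Type} (U : Pomset A) : (starCtx A).ins U = U := by
  induction U using Quotient.inductionOn with | _ u => ?_
  refine Eq.symm (Quotient.sound (iso_of (fun x => Sum.inr x) ?_ ?_ ?_))
  · rintro (x | x)
    · exact absurd rfl x.2
    · exact ⟨x, rfl⟩
  · intro x y; exact Iff.rfl
  · intro x; rfl

theorem star_spctx {A : Type} : (starCtx A).IsSPCtx :=
  ⟨⟨PUnit.unit, rfl, fun _ _ => rfl⟩, .single _⟩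

theorem map_sp {A B : Type} (f : A → B) {U : Pomset A} (h : U.IsSP) : (U.map f).IsSP := by
  induction h with
  | empty =>
    have : Pomset.map f (Pomset.empty A) = Pomset.empty B :=
      Quotient.sound ⟨OrderIso.refl _, fun x => x.elim0⟩
    rw [this]; exact .empty
  | single a => exact .single (f a)
  | @seq U V _ _ h1 h2 =>
    have : Pomset.map f (Pomset.seq U V) = Pomset.seq (U.map f) (V.map f) := by
      induction U using Quotient.inductionOn with | _ u => ?_
      induction V using Quotient.inductionOn with | _ v => ?_
      refine Quotient.sound ⟨OrderIso.refl (u.carrier ⊕ₗ v.carrier), ?_⟩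
      rintro (x | x) <;> rfl
    rw [this]; exact .seq h1 h2
  | @par U V _ _ h1 h2 =>
    have : Pomset.map f (Pomset.par U V) = Pomset.par (U.map f) (V.map f) := by
      induction U using Quotient.inductionOn with | _ u => ?_
      induction V using Quotient.inductionOn with | _ v => ?_
      refine Quotient.sound ⟨OrderIso.refl (u.carrier ⊕ v.carrier), ?_⟩
      rintro (x | x) <;> rfl
    rw [this]; exact .par h1 h2

theorem us_seqL {A : Type} (u : LPoset A) {c : LPoset (Option A)} (h : c.uniqueStarL) :
    ((u.mapL some).seqL c).uniqueStarL := by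
  obtain ⟨s, hs, hu⟩ := h
  refine ⟨toLex (Sum.inr s), hs, ?_⟩
  rintro (x | x) hx
  · exact absurd hx (Option.some_ne_none _)
  · exact congrArg (fun z => toLex (Sum.inr z)) (hu x hx)

theorem us_seqR {A : Type} (u : LPoset A) {c : LPoset (Option A)} (h : c.uniqueStarL) :
    (c.seqL (u.mapL some)).uniqueStarL := by
  obtain ⟨s, hs, hu⟩ := h
  refine ⟨toLex (Sum.inl s), hs, ?_⟩
  rintro (x | x) hx
  · exact congrArg (fun z => toLex (Sum.inl z)) (hu x hx)
  · exact absurd hx (Option.some_ne_none _)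

theorem us_par {A : Type} (u : LPoset A) {c : LPoset (Option A)} (h : c.uniqueStarL) :
    ((u.mapL some).parL c).uniqueStarL := by
  obtain ⟨s, hs, hu⟩ := h
  refine ⟨(Sum.inr s), hs, ?_⟩
  rintro (x | x) hx
  · exact absurd hx (Option.some_ne_none _)
  · exact congrArg (fun z => (Sum.inr z)) (hu x hx)

theorem ctx_seqL {A : Type} {U : Pomset A} (hU : U.IsSP) {C : Pomset (Option A)}
    (hC : C.IsSPCtx) : (Pomset.seq (U.map some) C).IsSPCtx := by
  refine ⟨?_, .seq (map_sp _ hU) hC.2⟩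
  obtain ⟨h, -⟩ := hC
  induction U using Quotient.inductionOn with | _ u => ?_
  induction C using Quotient.inductionOn with | _ c => ?_
  exact us_seqL u h

theorem ctx_seqR {A : Type} {U : Pomset A} (hU : U.IsSP) {C : Pomset (Option A)}
    (hC : C.IsSPCtx) : (Pomset.seq C (U.map some)).IsSPCtx := by
  refine ⟨?_, .seq hC.2 (map_sp _ hU)⟩
  obtain ⟨h, -⟩ := hC
  induction U using Quotient.inductionOn with | _ u => ?_
  induction C using Quotient.inductionOn with | _ c => ?_
  exact us_seqR u h

theorem ctx_par {A : Type} {U : Pomset A} (hU : U.IsSP) {C : Pomset (Option A)}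
    (hC : C.IsSPCtx) : (Pomset.par (U.map some) C).IsSPCtx := by
  refine ⟨?_, .par (map_sp _ hU) hC.2⟩
  obtain ⟨h, -⟩ := hC
  induction U using Quotient.inductionOn with | _ u => ?_
  induction C using Quotient.inductionOn with | _ c => ?_
  exact us_par u h

theorem ins_seqL {A : Type} (U : Pomset A) {C : Pomset (Option A)} (hC : C.IsCtx)
    (V : Pomset A) : (Pomset.seq (U.map some) C).ins V = Pomset.seq U (C.ins V) := by
  induction U using Quotient.inductionOn with | _ u => ?_
  induction V using Quotient.inductionOn with | _ v => ?_
  induction C using Quotient.inductionOn with | _ c => ?_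
  have h : c.uniqueStarL := hC
  have h' := us_seqL u h
  obtain ⟨s, hs, hu⟩ := id h
  refine Eq.symm (Quotient.sound (iso_of (u := u.seqL (c.insL v))
    (v := ((u.mapL some).seqL c).insL v)
    (fun x => match ofLex x with
      | Sum.inl x => Sum.inl ⟨toLex (Sum.inl x), Option.some_ne_none _⟩
      | Sum.inr (Sum.inl y) => Sum.inl ⟨toLex (Sum.inr y.1), y.2⟩
      | Sum.inr (Sum.inr y) => Sum.inr y) ?_ ?_ ?_))
  · rintro (⟨x | x, hx⟩ | x)
    · exact ⟨toLex (Sum.inl x), rfl⟩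
    · exact ⟨toLex (Sum.inr (Sum.inl ⟨x, hx⟩)), rfl⟩
    · exact ⟨toLex (Sum.inr (Sum.inr x)), rfl⟩
  · rintro (x | x | x) (y | y | y)
    · exact (seqL_ll (u := u.mapL some) (v := c) x y).trans
        (seqL_ll (u := u) (v := c.insL v) x y).symm
    · exact iff_of_true (seqL_lr (u := u.mapL some) (v := c) x y.1)
        (seqL_lr (u := u) (v := c.insL v) x _)
    · exact iff_of_true ⟨h', toLex (Sum.inr s), hs, seqL_lr (u := u.mapL some) (v := c) x s⟩
        (seqL_lr (u := u) (v := c.insL v) x _)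
    · exact iff_of_false (seqL_rl (u := u.mapL some) (v := c) y x.1)
        (seqL_rl (u := u) (v := c.insL v) y _)
    · exact (seqL_rr (u := u.mapL some) (v := c) x.1 y.1).trans
        (seqL_rr (u := u) (v := c.insL v) (Sum.inl x) (Sum.inl y)).symm
    · refine Iff.trans ?_ (seqL_rr (u := u) (v := c.insL v) (Sum.inl x) (Sum.inr y)).symm
      constructor
      · rintro ⟨-, (t | t), ht, hle⟩
        · exact absurd ht (Option.some_ne_none _)
        · exact ⟨h, t, ht, (seqL_rr (u := u.mapL some) (v := c) x.1 t).1 hle⟩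
      · rintro ⟨-, t, ht, hle⟩
        exact ⟨h', toLex (Sum.inr t), ht, (seqL_rr (u := u.mapL some) (v := c) x.1 t).2 hle⟩
    · refine iff_of_false ?_ (seqL_rl (u := u) (v := c.insL v) y _)
      rintro ⟨-, (t | t), ht, hle⟩
      · exact absurd ht (Option.some_ne_none _)
      · exact (seqL_rl (u := u.mapL some) (v := c) y t) hle
    · refine Iff.trans ?_ (seqL_rr (u := u) (v := c.insL v) (Sum.inr x) (Sum.inl y)).symm
      constructor
      · rintro ⟨-, (t | t), ht, hle⟩
        · exact absurd ht (Option.some_ne_none _)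
        · exact ⟨h, t, ht, (seqL_rr (u := u.mapL some) (v := c) t y.1).1 hle⟩
      · rintro ⟨-, t, ht, hle⟩
        exact ⟨h', toLex (Sum.inr t), ht, (seqL_rr (u := u.mapL some) (v := c) t y.1).2 hle⟩
    · exact (seqL_rr (u := u) (v := c.insL v) (Sum.inr x) (Sum.inr y)).symm
  · rintro (x | x | x) <;> rfl

theorem ins_seqR {A : Type} (U : Pomset A) {C : Pomset (Option A)} (hC : C.IsCtx)
    (V : Pomset A) : (Pomset.seq C (U.map some)).ins V = Pomset.seq (C.ins V) U := by
  induction U using Quotient.inductionOn with | _ u => ?_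
  induction V using Quotient.inductionOn with | _ v => ?_
  induction C using Quotient.inductionOn with | _ c => ?_
  have h : c.uniqueStarL := hC
  have h' := us_seqR u h
  obtain ⟨s, hs, hu⟩ := id h
  refine Eq.symm (Quotient.sound (iso_of (u := (c.insL v).seqL u)
    (v := (c.seqL (u.mapL some)).insL v)
    (fun x => match ofLex x with
      | Sum.inr x => Sum.inl ⟨toLex (Sum.inr x), Option.some_ne_none _⟩
      | Sum.inl (Sum.inl y) => Sum.inl ⟨toLex (Sum.inl y.1), y.2⟩
      | Sum.inl (Sum.inr y) => Sum.inr y) ?_ ?_ ?_))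
  · rintro (⟨x | x, hx⟩ | x)
    · exact ⟨toLex (Sum.inl (Sum.inl ⟨x, hx⟩)), rfl⟩
    · exact ⟨toLex (Sum.inr x), rfl⟩
    · exact ⟨toLex (Sum.inl (Sum.inr x)), rfl⟩
  · rintro ((x | x) | x) ((y | y) | y)
    · exact (seqL_ll (v := u.mapL some) (u := c) x.1 y.1).trans
        (seqL_ll (v := u) (u := c.insL v) (Sum.inl x) (Sum.inl y)).symm
    · refine Iff.trans ?_ (seqL_ll (v := u) (u := c.insL v) (Sum.inl x) (Sum.inr y)).symm
      constructor
      · rintro ⟨-, (t | t), ht, hle⟩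
        · exact ⟨h, t, ht, (seqL_ll (v := u.mapL some) (u := c) x.1 t).1 hle⟩
        · exact absurd ht (Option.some_ne_none _)
      · rintro ⟨-, t, ht, hle⟩
        exact ⟨h', toLex (Sum.inl t), ht, (seqL_ll (v := u.mapL some) (u := c) x.1 t).2 hle⟩
    · exact iff_of_true (seqL_lr (v := u.mapL some) (u := c) x.1 y)
        (seqL_lr (v := u) (u := c.insL v) _ y)
    · refine Iff.trans ?_ (seqL_ll (v := u) (u := c.insL v) (Sum.inr x) (Sum.inl y)).symm
      constructor
      · rintro ⟨-, (t | t), ht, hle⟩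
        · exact ⟨h, t, ht, (seqL_ll (v := u.mapL some) (u := c) t y.1).1 hle⟩
        · exact absurd ht (Option.some_ne_none _)
      · rintro ⟨-, t, ht, hle⟩
        exact ⟨h', toLex (Sum.inl t), ht, (seqL_ll (v := u.mapL some) (u := c) t y.1).2 hle⟩
    · exact (seqL_ll (v := u) (u := c.insL v) (Sum.inr x) (Sum.inr y)).symm
    · exact iff_of_true ⟨h', toLex (Sum.inl s), hs, seqL_lr (v := u.mapL some) (u := c) s y⟩
        (seqL_lr (v := u) (u := c.insL v) _ y)
    · exact iff_of_false (seqL_rl (v := u.mapL some) (u := c) y.1 x)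
        (seqL_rl (v := u) (u := c.insL v) _ x)
    · refine iff_of_false ?_ (seqL_rl (v := u) (u := c.insL v) _ x)
      rintro ⟨-, (t | t), ht, hle⟩
      · exact (seqL_rl (v := u.mapL some) (u := c) t x) hle
      · exact absurd ht (Option.some_ne_none _)
    · exact (seqL_rr (v := u.mapL some) (u := c) x y).trans
        (seqL_rr (v := u) (u := c.insL v) x y).symm
  · rintro ((x | x) | x) <;> rfl

theorem ins_par {A : Type} (U : Pomset A) {C : Pomset (Option A)} (hC : C.IsCtx)
    (V : Pomset A) : (Pomset.par (U.map some) C).ins V = Pomset.par U (C.ins V) := by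
  induction U using Quotient.inductionOn with | _ u => ?_
  induction V using Quotient.inductionOn with | _ v => ?_
  induction C using Quotient.inductionOn with | _ c => ?_
  have h : c.uniqueStarL := hC
  have h' := us_par u h
  obtain ⟨s, hs, hu⟩ := id h
  refine Eq.symm (Quotient.sound (iso_of (u := u.parL (c.insL v))
    (v := ((u.mapL some).parL c).insL v)
    (fun x => match x with
      | Sum.inl x => Sum.inl ⟨Sum.inl x, Option.some_ne_none _⟩
      | Sum.inr (Sum.inl y) => Sum.inl ⟨Sum.inr y.1, y.2⟩
      | Sum.inr (Sum.inr y) => Sum.inr y) ?_ ?_ ?_))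
  · rintro (⟨x | x, hx⟩ | x)
    · exact ⟨Sum.inl x, rfl⟩
    · exact ⟨Sum.inr (Sum.inl ⟨x, hx⟩), rfl⟩
    · exact ⟨Sum.inr (Sum.inr x), rfl⟩
  · rintro (x | x | x) (y | y | y)
    · exact Sum.inl_le_inl_iff.trans Sum.inl_le_inl_iff.symm
    · exact iff_of_false Sum.not_inl_le_inr Sum.not_inl_le_inr
    · refine iff_of_false ?_ Sum.not_inl_le_inr
      rintro ⟨-, (t | t), ht, hle⟩
      · exact absurd ht (Option.some_ne_none _)
      · exact Sum.not_inl_le_inr hle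
    · exact iff_of_false Sum.not_inr_le_inl Sum.not_inr_le_inl
    · exact (parL_rr (u := u.mapL some) (v := c) x.1 y.1).trans
        (parL_rr (u := u) (v := c.insL v) (Sum.inl x) (Sum.inl y)).symm
    · refine Iff.trans ?_ Sum.inr_le_inr_iff.symm
      constructor
      · rintro ⟨-, (t | t), ht, hle⟩
        · exact absurd ht (Option.some_ne_none _)
        · exact ⟨h, t, ht, Sum.inr_le_inr_iff.1 hle⟩
      · rintro ⟨-, t, ht, hle⟩
        exact ⟨h', (Sum.inr t), ht, Sum.inr_le_inr_iff.2 hle⟩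
    · refine iff_of_false ?_ Sum.not_inr_le_inl
      rintro ⟨-, (t | t), ht, hle⟩
      · exact absurd ht (Option.some_ne_none _)
      · exact Sum.not_inr_le_inl hle
    · refine Iff.trans ?_ Sum.inr_le_inr_iff.symm
      constructor
      · rintro ⟨-, (t | t), ht, hle⟩
        · exact absurd ht (Option.some_ne_none _)
        · exact ⟨h, t, ht, Sum.inr_le_inr_iff.1 hle⟩
      · rintro ⟨-, t, ht, hle⟩
        exact ⟨h', (Sum.inr t), ht, Sum.inr_le_inr_iff.2 hle⟩
    · exact (parL_rr (u := u) (v := c.insL v) (Sum.inr x) (Sum.inr y)).symm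
  · rintro (x | x | x) <;> rfl

/-! ### Closure -/

theorem cl_sub {A : Type} {H : HypSet A} {L K : Lang A} (h : L ⊆ cl H K) :
    cl H L ⊆ cl H K := by
  intro U hU
  induction hU with
  | base hU => exact h hU
  | step hef hC _ hU ih => exact closure.step hef hC ih hU

theorem sub_cl {A : Type} (H : HypSet A) (L : Lang A) : L ⊆ cl H L := fun _ h => .base h

theorem cl_eq {A : Type} {H : HypSet A} {L K : Lang A} (h : L ⊆ cl H K) (h' : K ⊆ cl H L) :
    cl H L = cl H K := (cl_sub h).antisymm (cl_sub h')

theorem seq_cl {A : Type} {H : HypSet A} {L K : Lang A} {U V : Pomset A} (hU : U.IsSP)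
    (hL : ∀ W ∈ L, Pomset.seq U W ∈ cl H K) (hV : V ∈ cl H L) : Pomset.seq U V ∈ cl H K := by
  induction hV with
  | base h => exact hL _ h
  | step hef hC _ hm ih =>
    rw [← ins_seqL _ hC.1]
    refine closure.step hef (ctx_seqL hU hC) (fun V hV => ?_) hm
    rw [ins_seqL _ hC.1]
    exact ih V hV

theorem cl_seq {A : Type} {H : HypSet A} {L K : Lang A} {U V : Pomset A} (hU : U.IsSP)
    (hL : ∀ W ∈ L, Pomset.seq W U ∈ cl H K) (hV : V ∈ cl H L) : Pomset.seq V U ∈ cl H K := by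
  induction hV with
  | base h => exact hL _ h
  | step hef hC _ hm ih =>
    rw [← ins_seqR _ hC.1]
    refine closure.step hef (ctx_seqR hU hC) (fun V hV => ?_) hm
    rw [ins_seqR _ hC.1]
    exact ih V hV

theorem par_cl {A : Type} {H : HypSet A} {L K : Lang A} {U V : Pomset A} (hU : U.IsSP)
    (hL : ∀ W ∈ L, Pomset.par U W ∈ cl H K) (hV : V ∈ cl H L) : Pomset.par U V ∈ cl H K := by
  induction hV with
  | base h => exact hL _ h
  | step hef hC _ hm ih =>
    rw [← ins_par _ hC.1]
    refine closure.step hef (ctx_par hU hC) (fun V hV => ?_) hm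
    rw [ins_par _ hC.1]
    exact ih V hV

theorem pow_sp {A : Type} {L : Lang A} (hL : L ⊆ SPset A) (n : ℕ) : L.pow n ⊆ SPset A := by
  induction n with
  | zero => rintro _ rfl; exact .empty
  | succ n ih => rintro _ ⟨U, hU, V, hV, rfl⟩; exact .seq (ih hU) (hL hV)

theorem lang_sp {A : Type} (e : Term A) : e.lang ⊆ SPset A := by
  induction e with
  | zero => rintro _ ⟨⟩
  | one => rintro _ rfl; exact .empty
  | var a => rintro _ rfl; exact .single a
  | add e f he hf => rintro U (h | h); exacts [he h, hf h]
  | seq e f he hf => rintro _ ⟨U, hU, V, hV, rfl⟩; exact .seq (he hU) (hf hV)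
  | par e f he hf => rintro _ ⟨U, hU, V, hV, rfl⟩; exact .par (he hU) (hf hV)
  | star e he =>
    rintro U h
    obtain ⟨n, hn⟩ := Set.mem_iUnion.1 h
    exact pow_sp he n hn

theorem seq_sub {A : Type} {H : HypSet A} {L L' K K' : Lang A} (hK : K ⊆ SPset A)
    (hL' : L' ⊆ SPset A) (h1 : L ⊆ cl H L') (h2 : K ⊆ cl H K') :
    Lang.seq L K ⊆ cl H (Lang.seq L' K') := by
  rintro _ ⟨U, hU, V, hV, rfl⟩
  refine cl_seq (hK hV) (fun W hW => ?_) (h1 hU)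
  exact seq_cl (hL' hW) (fun X hX => sub_cl _ _ ⟨W, hW, X, hX, rfl⟩) (h2 hV)

theorem par_sub {A : Type} {H : HypSet A} {L L' K K' : Lang A} (hK : K ⊆ SPset A)
    (hL' : L' ⊆ SPset A) (h1 : L ⊆ cl H L') (h2 : K ⊆ cl H K') :
    Lang.par L K ⊆ cl H (Lang.par L' K') := by
  rintro _ ⟨U, hU, V, hV, rfl⟩
  rw [par_comm]
  refine par_cl (hK hV) (fun W hW => ?_) (h1 hU)
  rw [par_comm]
  exact par_cl (hL' hW) (fun X hX => sub_cl _ _ ⟨W, hW, X, hX, rfl⟩) (h2 hV)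

theorem cl_mono {A : Type} {H : HypSet A} {L K : Lang A} (h : L ⊆ K) : cl H L ⊆ cl H K :=
  cl_sub (h.trans (sub_cl H K))

theorem star_sub {A : Type} {H : HypSet A} {L L' : Lang A} (hL : L ⊆ SPset A)
    (hL' : L' ⊆ SPset A) (h1 : L ⊆ cl H L') : Lang.star L ⊆ cl H (Lang.star L') := by
  have key : ∀ n, L.pow n ⊆ cl H (L'.pow n) := by
    intro n
    induction n with
    | zero => exact sub_cl _ _
    | succ n ih => exact seq_sub hL (pow_sp hL' n) ih h1
  intro U hU
  obtain ⟨n, hn⟩ := Set.mem_iUnion.1 hU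
  exact cl_mono (Set.subset_iUnion _ n) (key n hn)

theorem seq_pow {A : Type} (L : Lang A) {U : Pomset A} (hU : U ∈ L) (n : ℕ) {V : Pomset A}
    (hV : V ∈ L.pow n) : Pomset.seq U V ∈ L.pow (n + 1) := by
  induction n generalizing V with
  | zero =>
    obtain rfl : V = Pomset.empty A := hV
    exact ⟨_, rfl, U, hU, by rw [seq_one, one_seq]⟩
  | succ n ih =>
    obtain ⟨X, hX, Y, hY, rfl⟩ := hV
    exact ⟨_, ih hX, Y, hY, seq_assoc _ _ _⟩

theorem pow_succ_sub {A : Type} (L : Lang A) (n : ℕ) {W : Pomset A} (hW : W ∈ L.pow (n + 1)) :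
    ∃ U ∈ L, ∃ V ∈ L.pow n, W = Pomset.seq U V := by
  induction n generalizing W with
  | zero =>
    obtain ⟨X, hX, Y, hY, rfl⟩ := hW
    obtain rfl : X = Pomset.empty A := hX
    exact ⟨Y, hY, _, rfl, by rw [seq_one, one_seq]⟩
  | succ n ih =>
    obtain ⟨X, hX, Y, hY, rfl⟩ := hW
    obtain ⟨U, hU, V, hV, rfl⟩ := ih hX
    exact ⟨U, hU, _, ⟨V, hV, Y, hY, rfl⟩, (seq_assoc _ _ _).symm⟩

theorem add_sub {A : Type} {H : HypSet A} {L K : Lang A} (h : L ⊆ cl H K) :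
    cl H (L ∪ K) = cl H K :=
  cl_eq (Set.union_subset h (sub_cl _ _)) (Set.subset_union_right.trans (sub_cl _ _))

theorem mem_star {A : Type} {L : Lang A} {U : Pomset A} :
    U ∈ Lang.star L ↔ ∃ n, U ∈ L.pow n := Set.mem_iUnion

/-- **Soundness of CKA with hypotheses**: if `e ≡^H f` then `cl_H(⟦e⟧) = cl_H(⟦f⟧)`. -/
theorem soundness (A : Type) (H : HypSet A) (e f : Term A)
    (h : CongH H e f) : cl H e.lang = cl H f.lang := by
  have ofEq : ∀ {L K : Lang A}, cl H L = cl H K → L ⊆ cl H K := fun {L K} h => h ▸ sub_cl H L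
  induction h with
  | refl e => rfl
  | symm _ ih => exact ih.symm
  | trans _ _ h1 h2 => exact h1.trans h2
  | addCong _ _ h1 h2 =>
    exact cl_eq
      (Set.union_subset ((ofEq h1).trans (cl_mono Set.subset_union_left))
        ((ofEq h2).trans (cl_mono Set.subset_union_right)))
      (Set.union_subset ((ofEq h1.symm).trans (cl_mono Set.subset_union_left))
        ((ofEq h2.symm).trans (cl_mono Set.subset_union_right)))
  | seqCong _ _ h1 h2 =>
    exact cl_eq (seq_sub (lang_sp _) (lang_sp _) (ofEq h1) (ofEq h2))
      (seq_sub (lang_sp _) (lang_sp _) (ofEq h1.symm) (ofEq h2.symm))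
  | parCong _ _ h1 h2 =>
    exact cl_eq (par_sub (lang_sp _) (lang_sp _) (ofEq h1) (ofEq h2))
      (par_sub (lang_sp _) (lang_sp _) (ofEq h1.symm) (ofEq h2.symm))
  | starCong _ h1 =>
    exact cl_eq (star_sub (lang_sp _) (lang_sp _) (ofEq h1))
      (star_sub (lang_sp _) (lang_sp _) (ofEq h1.symm))
  | addZero e => exact congrArg _ (Set.union_empty _)
  | addIdem e => exact congrArg _ (Set.union_self _)
  | addComm e f => exact congrArg _ (Set.union_comm _ _)
  | addAssoc e f g => exact congrArg _ (Set.union_assoc _ _ _).symm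
  | seqAssoc e f g =>
    refine congrArg _ (Set.Subset.antisymm ?_ ?_)
    · rintro _ ⟨U, hU, _, ⟨V, hV, W, hW, rfl⟩, rfl⟩
      exact ⟨_, ⟨U, hU, V, hV, rfl⟩, W, hW, seq_assoc _ _ _⟩
    · rintro _ ⟨_, ⟨U, hU, V, hV, rfl⟩, W, hW, rfl⟩
      exact ⟨U, hU, _, ⟨V, hV, W, hW, rfl⟩, (seq_assoc _ _ _).symm⟩
  | seqDistL e f g =>
    refine congrArg _ (Set.Subset.antisymm ?_ ?_)
    · rintro _ ⟨U, hU, V, hV | hV, rfl⟩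
      · exact Or.inl ⟨U, hU, V, hV, rfl⟩
      · exact Or.inr ⟨U, hU, V, hV, rfl⟩
    · rintro _ (⟨U, hU, V, hV, rfl⟩ | ⟨U, hU, V, hV, rfl⟩)
      · exact ⟨U, hU, V, Or.inl hV, rfl⟩
      · exact ⟨U, hU, V, Or.inr hV, rfl⟩
  | seqDistR e f g =>
    refine congrArg _ (Set.Subset.antisymm ?_ ?_)
    · rintro _ ⟨U, hU | hU, V, hV, rfl⟩
      · exact Or.inl ⟨U, hU, V, hV, rfl⟩
      · exact Or.inr ⟨U, hU, V, hV, rfl⟩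
    · rintro _ (⟨U, hU, V, hV, rfl⟩ | ⟨U, hU, V, hV, rfl⟩)
      · exact ⟨U, Or.inl hU, V, hV, rfl⟩
      · exact ⟨U, Or.inr hU, V, hV, rfl⟩
  | seqOneR e =>
    refine congrArg _ (Set.Subset.antisymm ?_ ?_)
    · rintro _ ⟨U, hU, _, rfl, rfl⟩
      rw [seq_one]; exact hU
    · intro U hU
      exact ⟨U, hU, _, rfl, (seq_one U).symm⟩
  | seqOneL e =>
    refine congrArg _ (Set.Subset.antisymm ?_ ?_)
    · rintro _ ⟨_, rfl, U, hU, rfl⟩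
      rw [one_seq]; exact hU
    · intro U hU
      exact ⟨_, rfl, U, hU, (one_seq U).symm⟩
  | seqZeroR e =>
    refine congrArg _ (Set.Subset.antisymm ?_ (Set.empty_subset _))
    rintro _ ⟨U, hU, _, ⟨⟩, rfl⟩
  | seqZeroL e =>
    refine congrArg _ (Set.Subset.antisymm ?_ (Set.empty_subset _))
    rintro _ ⟨U, ⟨⟩, _⟩
  | parComm e f =>
    refine congrArg _ (Set.Subset.antisymm ?_ ?_)
    · rintro _ ⟨U, hU, V, hV, rfl⟩
      exact ⟨V, hV, U, hU, par_comm _ _⟩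
    · rintro _ ⟨U, hU, V, hV, rfl⟩
      exact ⟨V, hV, U, hU, par_comm _ _⟩
  | parOne e =>
    refine congrArg _ (Set.Subset.antisymm ?_ ?_)
    · rintro _ ⟨U, hU, _, rfl, rfl⟩
      rw [par_one]; exact hU
    · intro U hU
      exact ⟨U, hU, _, rfl, (par_one U).symm⟩
  | parZero e =>
    refine congrArg _ (Set.Subset.antisymm ?_ (Set.empty_subset _))
    rintro _ ⟨U, hU, _, ⟨⟩, rfl⟩
  | parAssoc e f g =>
    refine congrArg _ (Set.Subset.antisymm ?_ ?_)
    · rintro _ ⟨U, hU, _, ⟨V, hV, W, hW, rfl⟩, rfl⟩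
      exact ⟨_, ⟨U, hU, V, hV, rfl⟩, W, hW, par_assoc _ _ _⟩
    · rintro _ ⟨_, ⟨U, hU, V, hV, rfl⟩, W, hW, rfl⟩
      exact ⟨U, hU, _, ⟨V, hV, W, hW, rfl⟩, (par_assoc _ _ _).symm⟩
  | parDist e f g =>
    refine congrArg _ (Set.Subset.antisymm ?_ ?_)
    · rintro _ ⟨U, hU, V, hV | hV, rfl⟩
      · exact Or.inl ⟨U, hU, V, hV, rfl⟩
      · exact Or.inr ⟨U, hU, V, hV, rfl⟩
    · rintro _ (⟨U, hU, V, hV, rfl⟩ | ⟨U, hU, V, hV, rfl⟩)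
      · exact ⟨U, hU, V, Or.inl hV, rfl⟩
      · exact ⟨U, hU, V, Or.inr hV, rfl⟩
  | starUnfoldL e =>
    refine congrArg _ (Set.Subset.antisymm ?_ ?_)
    · rintro _ (rfl | ⟨U, hU, V, hV, rfl⟩)
      · exact mem_star.2 ⟨0, rfl⟩
      · obtain ⟨n, hn⟩ := mem_star.1 hV
        exact mem_star.2 ⟨n + 1, seq_pow _ hU n hn⟩
    · intro U hU
      obtain ⟨n, hn⟩ := mem_star.1 hU
      cases n with
      | zero => exact Or.inl hn
      | succ n =>
        obtain ⟨X, hX, V, hV, rfl⟩ := pow_succ_sub _ n hn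
        exact Or.inr ⟨X, hX, V, mem_star.2 ⟨n, hV⟩, rfl⟩
  | starUnfoldR e =>
    refine congrArg _ (Set.Subset.antisymm ?_ ?_)
    · rintro _ (rfl | ⟨U, hU, V, hV, rfl⟩)
      · exact mem_star.2 ⟨0, rfl⟩
      · obtain ⟨n, hn⟩ := mem_star.1 hU
        exact mem_star.2 ⟨n + 1, U, hn, V, hV, rfl⟩
    · intro U hU
      obtain ⟨n, hn⟩ := mem_star.1 hU
      cases n with
      | zero => exact Or.inl hn
      | succ n =>
        obtain ⟨X, hX, V, hV, rfl⟩ := hn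
        exact Or.inr ⟨X, mem_star.2 ⟨n, hX⟩, V, hV, rfl⟩
  | @lfpL e f g _ ih =>
    have h0 := ofEq ih
    have he : e.lang ⊆ cl H g.lang := fun U hU => h0 (Or.inl (Or.inl hU))
    have hfg : Lang.seq f.lang g.lang ⊆ cl H g.lang := fun U hU => h0 (Or.inl (Or.inr hU))
    refine add_sub ?_
    rintro _ ⟨U, hU, V, hV, rfl⟩
    obtain ⟨n, hn⟩ := mem_star.1 hU
    have hV' := he hV
    clear hV hU
    induction n generalizing U V with
    | zero =>
      obtain rfl : U = Pomset.empty A := hn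
      rw [one_seq]; exact hV'
    | succ n ihn =>
      obtain ⟨X, hX, Y, hY, rfl⟩ := hn
      rw [← seq_assoc]
      exact ihn X _ hX
        (seq_cl (lang_sp _ hY) (fun W hW => hfg ⟨Y, hY, W, hW, rfl⟩) hV')
  | @lfpR e f g _ ih =>
    have h0 := ofEq ih
    have he : e.lang ⊆ cl H f.lang := fun U hU => h0 (Or.inl (Or.inl hU))
    have hfg : Lang.seq f.lang g.lang ⊆ cl H f.lang := fun U hU => h0 (Or.inl (Or.inr hU))
    refine add_sub ?_
    rintro _ ⟨U, hU, V, hV, rfl⟩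
    obtain ⟨n, hn⟩ := mem_star.1 hV
    clear hV
    induction n generalizing V with
    | zero =>
      obtain rfl : V = Pomset.empty A := hn
      rw [seq_one]; exact he hU
    | succ n ihn =>
      obtain ⟨X, hX, Y, hY, rfl⟩ := hn
      rw [seq_assoc]
      exact cl_seq (lang_sp _ hY) (fun W hW => hfg ⟨W, hW, Y, hY, rfl⟩) (ihn X hX)
  | @hyp e f hef =>
    refine add_sub fun U hU => ?_
    rw [← star_ins U]
    refine closure.step hef star_spctx (fun V hV => ?_) hU
    rw [star_ins]; exact .base hV

end CKAH
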